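/- arXiv:2602.16797 — 4 statements merged into one kernel-verified Lean document; each statement's English description precedes it below -/
import Mathlib

section
/- Let A ∈ ℂ^{m×n} have full column rank and let S ∈ ℂ^{d×m} be a subspace embedding for A with distortion η ∈ [0,1). Let SA = UΣV* be an (economy-size) singular value decomposition of SA and define the preconditioner P := VΣ⁻¹ ∈ ℂ^{n×n}. Then every singular value σ of the matrix AP satisfies 1/(1+η) ≤ σ² ≤ 1/(1−η); equivalently, σ_min(AP)² ≥ 1/(1+η) and σ_max(AP)² ≤ 1/(1−η). -/
/-!
Full column rank of `A` and `η < 1` make `SA` injective, so all `s i` are nonzero and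
`SAP = UΣVᴴVΣ⁻¹ = U`, a matrix with orthonormal columns. Applying the embedding inequalities to
`y = Pu` with `‖u‖ = 1` therefore gives `(1-η)‖APu‖² ≤ 1 ≤ (1+η)‖APu‖²`. A squared singular value
of `AP` is the value of `‖APu‖²` at a unit eigenvector `u` of `(AP)ᴴAP`.
-/

open Matrix

/-- The linear action of a complex matrix on Euclidean space: `mulE A v = A v`. -/
noncomputable def mulE {m n : ℕ} (A : Matrix (Fin m) (Fin n) ℂ)
    (v : EuclideanSpace ℂ (Fin n)) : EuclideanSpace ℂ (Fin m) :=
  Matrix.toEuclideanLin A v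

/-- `S` is a subspace embedding for `A` with distortion `η`:
`(1-η)‖Ay‖² ≤ ‖SAy‖² ≤ (1+η)‖Ay‖²` for all `y`. -/
def IsSubspaceEmbedding {d m n : ℕ} (S : Matrix (Fin d) (Fin m) ℂ)
    (A : Matrix (Fin m) (Fin n) ℂ) (η : ℝ) : Prop :=
  ∀ y : EuclideanSpace ℂ (Fin n),
    (1 - η) * ‖mulE A y‖ ^ 2 ≤ ‖mulE (S * A) y‖ ^ 2 ∧
      ‖mulE (S * A) y‖ ^ 2 ≤ (1 + η) * ‖mulE A y‖ ^ 2

/-- `σ` lists the singular values of `A` in decreasing order: `σ` is antitone, nonnegative,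
and there is an orthonormal (eigen)basis `B` with `AᴴA (B i) = σᵢ² • B i`. -/
def HasSingularValues {m n : ℕ} (A : Matrix (Fin m) (Fin n) ℂ) (σ : Fin n → ℝ) : Prop :=
  Antitone σ ∧ (∀ i, 0 ≤ σ i) ∧
    ∃ B : Fin n → EuclideanSpace ℂ (Fin n), Orthonormal ℂ B ∧
      ∀ i, mulE (Aᴴ * A) (B i) = ((σ i ^ 2 : ℝ) : ℂ) • B i

/-- The spectral norm (largest singular value) of a matrix, as the operator norm of its
action between Euclidean spaces. -/
noncomputable def specNorm {m n : ℕ} (A : Matrix (Fin m) (Fin n) ℂ) : ℝ :=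
  ‖LinearMap.toContinuousLinearMap (Matrix.toEuclideanLin A)‖

lemma mulE_mul {l m n : ℕ} (M : Matrix (Fin l) (Fin m) ℂ) (N : Matrix (Fin m) (Fin n) ℂ)
    (v : EuclideanSpace ℂ (Fin n)) : mulE (M * N) v = mulE M (mulE N v) := by
  simp [mulE, Matrix.toLpLin_apply]

lemma mulE_one {n : ℕ} (v : EuclideanSpace ℂ (Fin n)) : mulE 1 v = v := by
  simp [mulE]

lemma mulE_zero_right {m n : ℕ} (M : Matrix (Fin m) (Fin n) ℂ) : mulE M 0 = 0 := by
  simp [mulE]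

/-- The Gram identity `‖Mv‖² = ⟪v, MᴴMv⟫`, through which both orthonormality of columns and
singular values are read off. -/
lemma inner_gram {m n : ℕ} (M : Matrix (Fin m) (Fin n) ℂ) (v : EuclideanSpace ℂ (Fin n)) :
    inner ℂ v (mulE (Mᴴ * M) v) = ((‖mulE M v‖ ^ 2 : ℝ) : ℂ) := by
  rw [mulE_mul]
  unfold mulE
  rw [Matrix.toEuclideanLin_conjTranspose_eq_adjoint, LinearMap.adjoint_inner_right,
    inner_self_eq_norm_sq_to_K]
  push_cast
  rfl

lemma norm_sq_mulE_of_gram_eq_one {m n : ℕ} (M : Matrix (Fin m) (Fin n) ℂ) (hM : Mᴴ * M = 1)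
    (v : EuclideanSpace ℂ (Fin n)) : ‖mulE M v‖ ^ 2 = ‖v‖ ^ 2 := by
  have h := inner_gram M v
  rw [hM, mulE_one, inner_self_eq_norm_sq_to_K] at h
  apply Complex.ofReal_injective
  rw [← h]
  push_cast
  rfl

lemma norm_sq_mulE_of_gram_eigenvector {m n : ℕ} (M : Matrix (Fin m) (Fin n) ℂ) (c : ℝ)
    (v : EuclideanSpace ℂ (Fin n)) (hv : ‖v‖ = 1) (h : mulE (Mᴴ * M) v = (c : ℂ) • v) :
    ‖mulE M v‖ ^ 2 = c := by
  have h' := inner_gram M v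
  rw [h, inner_smul_right, inner_self_eq_norm_sq_to_K, hv] at h'
  norm_num at h'
  exact_mod_cast h'.symm

/-- Randomized preconditioning, Fact 3.1 / Rokhlin–Tygert:
if `S` is a subspace embedding for the full-column-rank matrix `A` with distortion
`η ∈ [0,1)`, `SA = UΣVᴴ` is an (economy) SVD, and `P := VΣ⁻¹`, then every singular value
`σ` of `AP` satisfies `1/(1+η) ≤ σ² ≤ 1/(1−η)`; equivalently the Rayleigh quotient
`‖APu‖²` lies in `[1/(1+η), 1/(1−η)]` for every unit vector `u`. -/
theorem randomized_preconditioning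
    {d m n : ℕ} (A : Matrix (Fin m) (Fin n) ℂ)
    (hrank : Function.Injective (mulE A))
    (S : Matrix (Fin d) (Fin m) ℂ) (η : ℝ) (hη0 : 0 ≤ η) (hη1 : η < 1)
    (hS : IsSubspaceEmbedding S A η)
    (U : Matrix (Fin d) (Fin n) ℂ) (V : Matrix (Fin n) (Fin n) ℂ) (s : Fin n → ℝ)
    (hU : Uᴴ * U = 1) (hV : Vᴴ * V = 1) (hs0 : ∀ i, 0 ≤ s i)
    (hSVD : S * A = U * Matrix.diagonal (fun i => (s i : ℂ)) * Vᴴ)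
    (P : Matrix (Fin n) (Fin n) ℂ)
    (hP : P = V * Matrix.diagonal (fun i => ((s i : ℂ))⁻¹)) :
    (∀ σAP : Fin n → ℝ, HasSingularValues (A * P) σAP →
      ∀ i, 1 / (1 + η) ≤ σAP i ^ 2 ∧ σAP i ^ 2 ≤ 1 / (1 - η)) ∧
    (∀ u : EuclideanSpace ℂ (Fin n), ‖u‖ = 1 →
      1 / (1 + η) ≤ ‖mulE (A * P) u‖ ^ 2 ∧ ‖mulE (A * P) u‖ ^ 2 ≤ 1 / (1 - η)) := by
  have hs : ∀ i, (s i : ℂ) ≠ 0 := by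
    intro i hi
    -- If `s i = 0`, then `y = V eᵢ` is a nonzero vector in the kernel of `SA`.
    set e : EuclideanSpace ℂ (Fin n) := EuclideanSpace.single i 1 with he
    have hD : mulE (Matrix.diagonal (fun i => (s i : ℂ))) e = 0 := by
      ext j
      by_cases hj : j = i
      · subst hj
        simp [mulE, Matrix.toLpLin_apply, Matrix.mulVec_diagonal, hi]
      · simp [mulE, Matrix.toLpLin_apply, he, hj]
    have hSA : mulE (S * A) (mulE V e) = 0 := by
      rw [hSVD, mulE_mul, ← mulE_mul Vᴴ V, hV, mulE_one, mulE_mul, hD, mulE_zero_right]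
    have h1 := (hS (mulE V e)).1
    rw [hSA, norm_zero] at h1
    have h2 : ‖mulE A (mulE V e)‖ ^ 2 = 0 := by
      have h3 := sq_nonneg ‖mulE A (mulE V e)‖
      nlinarith
    have hA : mulE A (mulE V e) = mulE A 0 := by
      rw [mulE_zero_right]
      exact norm_eq_zero.mp (pow_eq_zero_iff two_ne_zero |>.mp h2)
    have h4 := norm_sq_mulE_of_gram_eq_one V hV e
    rw [hrank hA, he] at h4
    simp at h4
  have hSAP : S * A * P = U := by
    have hD : Matrix.diagonal (fun i => (s i : ℂ)) *
        Matrix.diagonal (fun i => ((s i : ℂ))⁻¹) = 1 := by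
      rw [Matrix.diagonal_mul_diagonal, ← Matrix.diagonal_one]
      congr 1
      funext i
      exact mul_inv_cancel₀ (hs i)
    rw [hSVD, hP, Matrix.mul_assoc _ Vᴴ, ← Matrix.mul_assoc Vᴴ V, hV, Matrix.one_mul,
      Matrix.mul_assoc, hD, Matrix.mul_one]
  have key : ∀ u : EuclideanSpace ℂ (Fin n), ‖u‖ = 1 →
      1 / (1 + η) ≤ ‖mulE (A * P) u‖ ^ 2 ∧ ‖mulE (A * P) u‖ ^ 2 ≤ 1 / (1 - η) := by
    intro u hu
    have h := hS (mulE P u)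
    rw [← mulE_mul (S * A) P, hSAP, norm_sq_mulE_of_gram_eq_one U hU, hu, ← mulE_mul] at h
    rw [div_le_iff₀ (by linarith), le_div_iff₀ (by linarith)]
    constructor <;> nlinarith [h.1, h.2]
  refine ⟨?_, key⟩
  rintro σ ⟨-, -, B, hB, hσ⟩ i
  rw [← norm_sq_mulE_of_gram_eigenvector (A * P) (σ i ^ 2) (B i) (hB.1 i) (hσ i)]
  exact key (B i) (hB.1 i)
end

section
/- Let A ∈ ℂ^{m×n} and let S ∈ ℂ^{d×m} be a subspace embedding for A with distortion η ∈ [0,1). Then for every index i ∈ {1,…,n}, the i-th largest singular value of SA approximates the i-th largest singular value of A in the sense that (1−η)·σ_i(A)² ≤ σ_i(SA)² ≤ (1+η)·σ_i(A)². In particular, (1−η)‖A‖² ≤ ‖SA‖² ≤ (1+η)‖A‖², where ‖·‖ denotes the spectral norm. -/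
/-!
Both claims are monotonicity statements for quadratic forms: if `‖M y‖² ≤ c ‖N y‖²` for all `y`,
then `σᵢ(M)² ≤ c σᵢ(N)²` (`sq_singularValue_le`) and `‖M‖² ≤ c ‖N‖²` (`sq_specNorm_le`).
For the singular values this is the Courant–Fischer argument. If `B` and `C` are orthonormal
eigenbases of `MᴴM` and `NᴴN`, a dimension count gives a nonzero `y` orthogonal to `B j` for `j > i`
and to `C j` for `j < i`. Expanding in the two bases (`sq_norm_mulE_eq_sum`) yields
`σᵢ(M)² ‖y‖² ≤ ‖M y‖² ≤ c ‖N y‖² ≤ c σᵢ(N)² ‖y‖²`.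

The upper bounds are the case `(M, N, c) = (SA, A, 1 + η)`; the lower bounds are the case
`(M, N, c) = (A, SA, (1 - η)⁻¹)`.
-/

open Matrix

open scoped InnerProductSpace

lemma inner_mulE_mulE {m n : ℕ} (M : Matrix (Fin m) (Fin n) ℂ) (x y : EuclideanSpace ℂ (Fin n)) :
    ⟪mulE M x, mulE M y⟫_ℂ = ⟪mulE (Mᴴ * M) x, y⟫_ℂ := by
  have h : mulE (Mᴴ * M) x = Matrix.toEuclideanLin Mᴴ (mulE M x) := by
    simp [mulE, Matrix.toLpLin_apply, Matrix.mulVec_mulVec]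
  rw [h, Matrix.toEuclideanLin_conjTranspose_eq_adjoint, LinearMap.adjoint_inner_left]
  rfl

/-- The quadratic form `‖M y‖²` is diagonal in an orthonormal eigenbasis of `MᴴM`. -/
lemma sq_norm_mulE_eq_sum {m n : ℕ} (M : Matrix (Fin m) (Fin n) ℂ) (σ : Fin n → ℝ)
    (b : OrthonormalBasis (Fin n) ℂ (EuclideanSpace ℂ (Fin n)))
    (hb : ∀ i, mulE (Mᴴ * M) (b i) = ((σ i ^ 2 : ℝ) : ℂ) • b i)
    (y : EuclideanSpace ℂ (Fin n)) :
    ‖mulE M y‖ ^ 2 = ∑ j, σ j ^ 2 * ‖⟪b j, y⟫_ℂ‖ ^ 2 := by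
  have hswap : ∀ j, ⟪mulE (Mᴴ * M) y, b j⟫_ℂ = ((σ j ^ 2 : ℝ) : ℂ) * ⟪y, b j⟫_ℂ := by
    intro j
    rw [← inner_mulE_mulE, ← inner_conj_symm, inner_mulE_mulE, hb, inner_smul_left, map_mul,
      inner_conj_symm, Complex.conj_conj]
  have h : ((‖mulE M y‖ ^ 2 : ℝ) : ℂ) = ((∑ j, σ j ^ 2 * ‖⟪b j, y⟫_ℂ‖ ^ 2 : ℝ) : ℂ) := by
    have h1 : ((‖mulE M y‖ ^ 2 : ℝ) : ℂ) = ⟪mulE M y, mulE M y⟫_ℂ := by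
      rw [inner_self_eq_norm_sq_to_K]; simp
    rw [h1, inner_mulE_mulE, ← b.sum_inner_mul_inner]
    push_cast
    refine Finset.sum_congr rfl fun j _ => ?_
    rw [hswap, mul_assoc, ← inner_conj_symm y (b j), Complex.conj_mul']
    push_cast
    rfl
  exact_mod_cast h

/-- `HasSingularValues` with its orthonormal family packaged as an `OrthonormalBasis`, which is
possible because it has `n` members. -/
lemma HasSingularValues.exists_basis {m n : ℕ} {M : Matrix (Fin m) (Fin n) ℂ} {σ : Fin n → ℝ}
    (h : HasSingularValues M σ) :
    ∃ b : OrthonormalBasis (Fin n) ℂ (EuclideanSpace ℂ (Fin n)),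
      ∀ i, mulE (Mᴴ * M) (b i) = ((σ i ^ 2 : ℝ) : ℂ) • b i := by
  obtain ⟨-, -, B, hB, he⟩ := h
  have hspan : ⊤ ≤ Submodule.span ℂ (Set.range B) :=
    (hB.linearIndependent.span_eq_top_of_card_eq_finrank' (by simp)).ge
  exact ⟨OrthonormalBasis.mk hB hspan, by simpa using he⟩

/-- The dimension count behind Courant–Fischer: only `n - 1` linear conditions are imposed. -/
lemma exists_ne_zero_inner_eq_zero {n : ℕ} (b c : Fin n → EuclideanSpace ℂ (Fin n)) (i : Fin n) :
    ∃ y : EuclideanSpace ℂ (Fin n), y ≠ 0 ∧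
      (∀ j, i < j → ⟪b j, y⟫_ℂ = 0) ∧ (∀ j, j < i → ⟪c j, y⟫_ℂ = 0) := by
  let L : EuclideanSpace ℂ (Fin n) →ₗ[ℂ] ({j : Fin n // j ≠ i} → ℂ) :=
    LinearMap.pi fun j => (innerSL ℂ (if i < j.1 then b j else c j)).toLinearMap
  have hlt : Module.finrank ℂ ({j : Fin n // j ≠ i} → ℂ) <
      Module.finrank ℂ (EuclideanSpace ℂ (Fin n)) := by
    have := i.pos
    simp [Fintype.card_subtype_compl]
    omega
  obtain ⟨y, hy, hy0⟩ := (Submodule.ne_bot_iff _).1 (LinearMap.ker_ne_bot_of_finrank_lt (f := L) hlt)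
  have key : ∀ j (hj : j ≠ i), ⟪if i < j then b j else c j, y⟫_ℂ = 0 := fun j hj =>
    congrFun (LinearMap.mem_ker.1 hy) ⟨j, hj⟩
  refine ⟨y, hy0, fun j hj => ?_, fun j hj => ?_⟩
  · simpa [hj] using key j hj.ne'
  · simpa [hj.not_gt] using key j hj.ne

lemma sq_singularValue_le {m m' n : ℕ} {M : Matrix (Fin m) (Fin n) ℂ}
    {N : Matrix (Fin m') (Fin n) ℂ} {σ τ : Fin n → ℝ} (hσ : HasSingularValues M σ)
    (hτ : HasSingularValues N τ) {c : ℝ} (hc : 0 ≤ c)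
    (h : ∀ y, ‖mulE M y‖ ^ 2 ≤ c * ‖mulE N y‖ ^ 2) (i : Fin n) :
    σ i ^ 2 ≤ c * τ i ^ 2 := by
  obtain ⟨b, hb⟩ := hσ.exists_basis
  obtain ⟨b', hb'⟩ := hτ.exists_basis
  obtain ⟨y, hy0, hyb, hyb'⟩ := exists_ne_zero_inner_eq_zero b b' i
  have hlow : σ i ^ 2 * ‖y‖ ^ 2 ≤ ‖mulE M y‖ ^ 2 := by
    rw [sq_norm_mulE_eq_sum M σ b hb, ← b.sum_sq_norm_inner_right y, Finset.mul_sum]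
    refine Finset.sum_le_sum fun j _ => ?_
    rcases lt_or_ge i j with hj | hj
    · simp [hyb j hj]
    · have := pow_le_pow_left₀ (hσ.2.1 i) (hσ.1 hj) 2
      gcongr
  have hupp : ‖mulE N y‖ ^ 2 ≤ τ i ^ 2 * ‖y‖ ^ 2 := by
    rw [sq_norm_mulE_eq_sum N τ b' hb', ← b'.sum_sq_norm_inner_right y, Finset.mul_sum]
    refine Finset.sum_le_sum fun j _ => ?_
    rcases lt_or_ge j i with hj | hj
    · simp [hyb' j hj]
    · have := pow_le_pow_left₀ (hτ.2.1 j) (hτ.1 hj) 2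
      gcongr
  have hpos : 0 < ‖y‖ ^ 2 := by positivity
  refine le_of_mul_le_mul_right ?_ hpos
  calc σ i ^ 2 * ‖y‖ ^ 2 ≤ c * ‖mulE N y‖ ^ 2 := hlow.trans (h y)
    _ ≤ c * (τ i ^ 2 * ‖y‖ ^ 2) := by gcongr
    _ = c * τ i ^ 2 * ‖y‖ ^ 2 := by ring

lemma sq_specNorm_le {m m' n : ℕ} {M : Matrix (Fin m) (Fin n) ℂ}
    {N : Matrix (Fin m') (Fin n) ℂ} {c : ℝ} (hc : 0 ≤ c)
    (h : ∀ y, ‖mulE M y‖ ^ 2 ≤ c * ‖mulE N y‖ ^ 2) :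
    specNorm M ^ 2 ≤ c * specNorm N ^ 2 := by
  have hN : 0 ≤ specNorm N := norm_nonneg _
  have hM : specNorm M ≤ √c * specNorm N := by
    refine ContinuousLinearMap.opNorm_le_bound _ (by positivity) fun y => ?_
    change ‖mulE M y‖ ≤ _
    have hNy : ‖mulE N y‖ ≤ specNorm N * ‖y‖ :=
      (LinearMap.toContinuousLinearMap (Matrix.toEuclideanLin N)).le_opNorm y
    refine le_of_sq_le_sq ?_ (by positivity)
    calc ‖mulE M y‖ ^ 2 ≤ c * ‖mulE N y‖ ^ 2 := h y
      _ ≤ c * (specNorm N * ‖y‖) ^ 2 := by gcongr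
      _ = (√c * specNorm N * ‖y‖) ^ 2 := by
        rw [mul_assoc, mul_pow (√c), Real.sq_sqrt hc]
  calc specNorm M ^ 2 ≤ (√c * specNorm N) ^ 2 := pow_le_pow_left₀ (norm_nonneg _) hM 2
    _ = c * specNorm N ^ 2 := by rw [mul_pow, Real.sq_sqrt hc]

/-- a subspace embedding `S` for `A` with distortion `η ∈ [0,1)` preserves all
singular values: `(1−η)·σᵢ(A)² ≤ σᵢ(SA)² ≤ (1+η)·σᵢ(A)²` for each `i`, and in particular
`(1−η)‖A‖² ≤ ‖SA‖² ≤ (1+η)‖A‖²` in the spectral norm. -/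
theorem embedding_preserves_singular_values
    {d m n : ℕ} (A : Matrix (Fin m) (Fin n) ℂ)
    (S : Matrix (Fin d) (Fin m) ℂ) (η : ℝ) (hη0 : 0 ≤ η) (hη1 : η < 1)
    (hS : IsSubspaceEmbedding S A η)
    (σA σSA : Fin n → ℝ)
    (hσA : HasSingularValues A σA) (hσSA : HasSingularValues (S * A) σSA) :
    (∀ i : Fin n, (1 - η) * σA i ^ 2 ≤ σSA i ^ 2 ∧ σSA i ^ 2 ≤ (1 + η) * σA i ^ 2) ∧
      ((1 - η) * specNorm A ^ 2 ≤ specNorm (S * A) ^ 2 ∧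
        specNorm (S * A) ^ 2 ≤ (1 + η) * specNorm A ^ 2) := by
  have hpos : 0 < 1 - η := by linarith
  have hupp : ∀ y, ‖mulE (S * A) y‖ ^ 2 ≤ (1 + η) * ‖mulE A y‖ ^ 2 := fun y => (hS y).2
  have hlow : ∀ y, ‖mulE A y‖ ^ 2 ≤ (1 - η)⁻¹ * ‖mulE (S * A) y‖ ^ 2 := fun y =>
    (le_inv_mul_iff₀ hpos).2 (hS y).1
  have hc : 0 ≤ 1 + η := by linarith
  have hc' : 0 ≤ (1 - η)⁻¹ := inv_nonneg.2 hpos.le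
  exact ⟨fun i => ⟨(le_inv_mul_iff₀ hpos).1 (sq_singularValue_le hσA hσSA hc' hlow i),
      sq_singularValue_le hσSA hσA hc hupp i⟩,
    (le_inv_mul_iff₀ hpos).1 (sq_specNorm_le hc' hlow), sq_specNorm_le hc hupp⟩
end

section
/- Let A ∈ ℂ^{m×n} have full column rank with singular values σ₁ ≥ … ≥ σ_n > 0 satisfying σ_{n−1} > σ_n, and let v_min be a unit right singular vector of A associated with σ_n. Let v ∈ ℂⁿ be a unit vector with ‖Av‖ < σ_{n−1}. Writing sin²∠(v, v_min) := 1 − |⟨v, v_min⟩|² and tan²∠(v, v_min) := sin²∠(v, v_min)/(1 − sin²∠(v, v_min)), one has tan²∠(v, v_min) ≤ (‖Av‖² − σ_n²)/(σ_{n−1}² − ‖Av‖²). -/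
/-!
Expanding `v` in an orthonormal eigenbasis `b` of `AᴴA` gives `‖Av‖² = ∑ σᵢ² |⟨bᵢ, v⟩|²`
(`norm_sq_mulE_eq_sum`). The gap `σₙ < σₙ₋₁` makes the eigenspace of `σₙ²` one-dimensional, so
`v_min` is a unimodular multiple of the last basis vector and, with `c = |⟨v, v_min⟩|²`,
`‖Av‖² ≥ σₙ² c + σₙ₋₁² (1 - c)` (`energy_lower_bound`). Since `‖Av‖ < σₙ₋₁` this forces `c > 0`, and
clearing denominators in `(1 - c) / c ≤ (‖Av‖² - σₙ²) / (σₙ₋₁² - ‖Av‖²)` yields the same inequality.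
-/

open Matrix

lemma inner_mulE_gram {m n : ℕ} (A : Matrix (Fin m) (Fin n) ℂ) (x y : EuclideanSpace ℂ (Fin n)) :
    inner ℂ x (mulE (Aᴴ * A) y) = inner ℂ (mulE A x) (mulE A y) := by
  have h : mulE (Aᴴ * A) y = Matrix.toEuclideanLin Aᴴ (mulE A y) := by
    ext i
    simp [mulE, Matrix.toLpLin_apply, Matrix.mulVec_mulVec]
  rw [h, Matrix.toEuclideanLin_conjTranspose_eq_adjoint, LinearMap.adjoint_inner_right]
  rfl

lemma inner_eigenvector_gram {m n : ℕ} (A : Matrix (Fin m) (Fin n) ℂ)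
    {e : EuclideanSpace ℂ (Fin n)} {l : ℝ} (he : mulE (Aᴴ * A) e = (l : ℂ) • e)
    (y : EuclideanSpace ℂ (Fin n)) :
    inner ℂ e (mulE (Aᴴ * A) y) = (l : ℂ) * inner ℂ e y := by
  rw [inner_mulE_gram, ← inner_conj_symm, ← inner_mulE_gram, he, inner_smul_right, map_mul,
    inner_conj_symm, Complex.conj_ofReal]

lemma norm_sq_mulE_eq_sum {m n : ℕ} (A : Matrix (Fin m) (Fin n) ℂ) (σ : Fin n → ℝ)
    (b : OrthonormalBasis (Fin n) ℂ (EuclideanSpace ℂ (Fin n)))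
    (hb : ∀ i, mulE (Aᴴ * A) (b i) = ((σ i ^ 2 : ℝ) : ℂ) • b i)
    (v : EuclideanSpace ℂ (Fin n)) :
    ‖mulE A v‖ ^ 2 = ∑ i, σ i ^ 2 * ‖inner ℂ (b i) v‖ ^ 2 := by
  have h : ((‖mulE A v‖ ^ 2 : ℝ) : ℂ) =
      ((∑ i, σ i ^ 2 * ‖inner ℂ (b i) v‖ ^ 2 : ℝ) : ℂ) := by
    have h1 : ((‖mulE A v‖ ^ 2 : ℝ) : ℂ) = inner ℂ (mulE A v) (mulE A v) := by
      rw [inner_self_eq_norm_sq_to_K]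
      push_cast
      rfl
    rw [h1, ← inner_mulE_gram, ← b.sum_inner_mul_inner]
    push_cast
    refine Finset.sum_congr rfl fun i _ => ?_
    rw [inner_eigenvector_gram A (hb i), ← inner_conj_symm v (b i), mul_left_comm,
      Complex.conj_mul']
    push_cast
    rfl
  exact_mod_cast h

/-- If every basis vector other than `b k` has singular value at least `p`, and `p` exceeds `σ k`,
then any unit eigenvector `u` for `σ k ^ 2` is parallel to `b k`, and the energy of a unit vector `v`
is bounded below by that of its components along and orthogonal to `u`. -/
lemma energy_lower_bound {m n : ℕ} (A : Matrix (Fin m) (Fin n) ℂ) (σ : Fin n → ℝ)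
    (hσ : ∀ i, 0 ≤ σ i)
    (b : OrthonormalBasis (Fin n) ℂ (EuclideanSpace ℂ (Fin n)))
    (hb : ∀ i, mulE (Aᴴ * A) (b i) = ((σ i ^ 2 : ℝ) : ℂ) • b i)
    (k : Fin n) (p : ℝ) (hp : ∀ i, i ≠ k → p ≤ σ i) (hkp : σ k < p)
    (u : EuclideanSpace ℂ (Fin n)) (hu : ‖u‖ = 1)
    (hu' : mulE (Aᴴ * A) u = ((σ k ^ 2 : ℝ) : ℂ) • u)
    (v : EuclideanSpace ℂ (Fin n)) (hv : ‖v‖ = 1) :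
    σ k ^ 2 * ‖inner ℂ v u‖ ^ 2 + p ^ 2 * (1 - ‖inner ℂ v u‖ ^ 2) ≤ ‖mulE A v‖ ^ 2 := by
  have hp0 : 0 ≤ p := (hσ k).trans hkp.le
  have hz : ∀ i, i ≠ k → inner ℂ (b i) u = 0 := by
    intro i hi
    have h := inner_eigenvector_gram A (hb i) u
    rw [hu', inner_smul_right] at h
    have hne : ((σ k ^ 2 : ℝ) : ℂ) ≠ ((σ i ^ 2 : ℝ) : ℂ) := by
      have := hp i hi
      have := hσ k
      exact fun h => absurd (Complex.ofReal_injective h) (by nlinarith)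
    by_contra h0
    exact hne (mul_right_cancel₀ h0 h)
  have hunit : ‖inner ℂ (b k) u‖ = 1 := by
    have h := b.sum_sq_norm_inner_right u
    rw [Finset.sum_eq_single k (fun i _ hi => by simp [hz i hi]) (by simp), hu] at h
    exact (sq_eq_sq₀ (norm_nonneg _) zero_le_one).1 h
  have hvu : ‖inner ℂ v u‖ = ‖inner ℂ (b k) v‖ := by
    rw [← b.sum_inner_mul_inner,
      Finset.sum_eq_single k (fun i _ hi => by simp [hz i hi]) (by simp), norm_mul, hunit, mul_one,
      norm_inner_symm]
  have hsum := b.sum_sq_norm_inner_right v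
  rw [hv, ← Finset.add_sum_erase _ _ (Finset.mem_univ k)] at hsum
  rw [hvu, norm_sq_mulE_eq_sum A σ b hb v, ← Finset.add_sum_erase _ _ (Finset.mem_univ k)]
  have hrest : 1 - ‖inner ℂ (b k) v‖ ^ 2 =
      ∑ i ∈ Finset.univ.erase k, ‖inner ℂ (b i) v‖ ^ 2 := by linarith
  rw [hrest, Finset.mul_sum]
  gcongr with i hi
  exact hp i (Finset.ne_of_mem_erase hi)

/-- under the setting of Statement 6, if additionally `‖Av‖ < σₙ₋₁`, then
`tan²∠(v, v_min) ≤ (‖Av‖² − σₙ²)/(σₙ₋₁² − ‖Av‖²)`, where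
`tan²∠(v,v_min) = sin²∠(v,v_min)/(1 − sin²∠(v,v_min))` and
`sin²∠(v,v_min) = 1 − |⟨v,v_min⟩|²`. -/
theorem tan_angle_energy_bound
    {m n : ℕ} (hn : 2 ≤ n)
    (A : Matrix (Fin m) (Fin n) ℂ)
    (hrank : Function.Injective (mulE A))
    (σ : Fin n → ℝ) (hσ : HasSingularValues A σ) (hpos : ∀ i, 0 < σ i)
    (hgap : σ ⟨n - 1, by omega⟩ < σ ⟨n - 2, by omega⟩)
    (vmin : EuclideanSpace ℂ (Fin n)) (hvmin1 : ‖vmin‖ = 1)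
    (hvmin2 : mulE (Aᴴ * A) vmin = ((σ ⟨n - 1, by omega⟩ ^ 2 : ℝ) : ℂ) • vmin)
    (v : EuclideanSpace ℂ (Fin n)) (hv : ‖v‖ = 1)
    (hbelow : ‖mulE A v‖ < σ ⟨n - 2, by omega⟩)
    (s2 t2 : ℝ) (hs2 : s2 = 1 - ‖@inner ℂ _ _ v vmin‖ ^ 2)
    (ht2 : t2 = s2 / (1 - s2)) :
    t2 ≤ (‖mulE A v‖ ^ 2 - σ ⟨n - 1, by omega⟩ ^ 2) /
      (σ ⟨n - 2, by omega⟩ ^ 2 - ‖mulE A v‖ ^ 2) := by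
  obtain ⟨hanti, hnn, B, hB, hBe⟩ := hσ
  haveI : Nonempty (Fin n) := ⟨⟨0, by omega⟩⟩
  let b : OrthonormalBasis (Fin n) ℂ (EuclideanSpace ℂ (Fin n)) :=
    (basisOfOrthonormalOfCardEqFinrank hB (by simp)).toOrthonormalBasis (by simpa using hB)
  have hbB : ∀ i, b i = B i := by intro i; simp [b]
  have key := energy_lower_bound A σ hnn b (fun i => by rw [hbB]; exact hBe i)
    ⟨n - 1, by omega⟩ (σ ⟨n - 2, by omega⟩)
    (fun i hi => hanti (by
      have : i.val ≠ n - 1 := fun h => hi (Fin.ext h)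
      have := i.isLt
      rw [Fin.le_def]
      show i.val ≤ n - 2
      omega))
    hgap vmin hvmin1 hvmin2 v hv
  have hden : ‖mulE A v‖ ^ 2 < σ ⟨n - 2, by omega⟩ ^ 2 :=
    pow_lt_pow_left₀ hbelow (norm_nonneg _) two_ne_zero
  subst ht2 hs2
  generalize ‖mulE A v‖ ^ 2 = a at *
  generalize hc : ‖inner ℂ v vmin‖ ^ 2 = c at *
  have hc0 : 0 ≤ c := hc ▸ sq_nonneg _
  -- With `c = 0` the junk value `1 / 0` would make the left side vanish; the energy bound
  -- excludes this case, as it would read `σₙ₋₁² ≤ ‖Av‖²`.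
  have hcpos : 0 < c := by
    rcases hc0.lt_or_eq with h | h
    · exact h
    · subst h
      linarith
  rw [sub_sub_cancel, div_le_div_iff₀ hcpos (by linarith)]
  linarith
end

section
/- Let σ_n, σ_{n−1} be reals with 0 < σ_n < σ_{n−1}, set gap := (σ_{n−1}² − σ_n²)/σ_n², and let η ∈ (0,1) satisfy η < gap/(2+gap). Suppose ρ ∈ ℝ satisfies σ_n² ≤ ρ² ≤ ((1+η)/(1−η))·σ_n². Then (ρ² − σ_n²)/(σ_{n−1}² − ρ²) ≤ 2η/((1−η)·gap − 2η), and the denominator (1−η)·gap − 2η is strictly positive. (Applied with ρ = ‖A v₀‖, this bounds the initial error ratio of the sketch-and-solve initialization.) -/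
/-!
With `D := (1 - η) * gap - 2 * η`, the upper bound on `ρ²` reads
`(1 - η)(ρ² - σₙ²) ≤ 2η σₙ²`. Since `σₙ₋₁² = σₙ² (1 + gap)`, it also gives
`(1 - η)(σₙ₋₁² - ρ²) ≥ σₙ² D > 0`. Dividing the first estimate by the second yields the claim.
-/

/-- with `0 < σₙ < σₙ₋₁`, `gap := (σₙ₋₁² − σₙ²)/σₙ²`, `η ∈ (0,1)` with
`η < gap/(2+gap)`, and `ρ` with `σₙ² ≤ ρ² ≤ ((1+η)/(1−η))·σₙ²`: the denominator
`(1−η)·gap − 2η` is strictly positive and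
`(ρ² − σₙ²)/(σₙ₋₁² − ρ²) ≤ 2η/((1−η)·gap − 2η)`. -/
theorem initial_error_ratio_bound
    (σn σn1 : ℝ) (h0 : 0 < σn) (h1 : σn < σn1)
    (gap : ℝ) (hgap : gap = (σn1 ^ 2 - σn ^ 2) / σn ^ 2)
    (η : ℝ) (hη0 : 0 < η) (hη1 : η < 1) (hηgap : η < gap / (2 + gap))
    (ρ : ℝ) (hρ1 : σn ^ 2 ≤ ρ ^ 2) (hρ2 : ρ ^ 2 ≤ (1 + η) / (1 - η) * σn ^ 2) :
    0 < (1 - η) * gap - 2 * η ∧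
      (ρ ^ 2 - σn ^ 2) / (σn1 ^ 2 - ρ ^ 2) ≤ 2 * η / ((1 - η) * gap - 2 * η) := by
  have hs : 0 < σn ^ 2 := by positivity
  have hη : 0 < 1 - η := by linarith
  have hgs : gap * σn ^ 2 = σn1 ^ 2 - σn ^ 2 := by
    rw [hgap]
    field_simp
  have hg : 0 < gap := by
    rw [hgap]
    exact div_pos (by nlinarith) hs
  have hD : 0 < (1 - η) * gap - 2 * η := by
    rw [lt_div_iff₀ (by linarith)] at hηgap
    linarith
  refine ⟨hD, ?_⟩
  have hnum : (1 - η) * (ρ ^ 2 - σn ^ 2) ≤ 2 * η * σn ^ 2 := by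
    rw [div_mul_eq_mul_div, le_div_iff₀ hη] at hρ2
    linarith
  have hden : σn ^ 2 * ((1 - η) * gap - 2 * η) ≤ (1 - η) * (σn1 ^ 2 - ρ ^ 2) := by
    have hsplit : (1 - η) * (σn1 ^ 2 - ρ ^ 2)
        = (1 - η) * (gap * σn ^ 2) - (1 - η) * (ρ ^ 2 - σn ^ 2) := by
      rw [hgs]
      ring
    rw [hsplit]
    linarith
  have hpos : 0 < σn1 ^ 2 - ρ ^ 2 :=
    pos_of_mul_pos_right (lt_of_lt_of_le (mul_pos hs hD) hden) hη.le
  rw [div_le_div_iff₀ hpos hD]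
  refine le_of_mul_le_mul_left ?_ hη
  have hleft := mul_le_mul_of_nonneg_right hnum hD.le
  have hright := mul_le_mul_of_nonneg_left hden (by linarith : 0 ≤ 2 * η)
  linarith
end
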